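/- There exists a language in trPCCFL that belongs neither to shuffleCFL nor to traceCFL. -/

import Mathlib

/-- `IsInterleaving w v u` means `u` is an interleaving of `w` and `v`. -/
inductive IsInterleaving {α : Type} : List α → List α → List α → Prop
  | nil : IsInterleaving [] [] []
  | left {a : α} {w v u : List α} : IsInterleaving w v u → IsInterleaving (a :: w) v (a :: u)
  | right {a : α} {w v u : List α} : IsInterleaving w v u → IsInterleaving w (a :: v) (a :: u)

/-- Shuffle of two languages. -/
def shuffleLang {α : Type} (L K : Set (List α)) : Set (List α) :=
  {u | ∃ w ∈ L, ∃ v ∈ K, IsInterleaving w v u}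

/-- A partially-commutative context-free grammar in Greibach form. -/
structure PCGrammar (α : Type) : Type 1 where
  V : Type
  finV : Finite V
  start : V
  prods : Set (V × α × List V)
  finP : prods.Finite
  indep : V → V → Prop
  indep_symm : ∀ {X Y : V}, indep X Y → indep Y X
  indep_irrefl : ∀ X : V, ¬ indep X X

/-- `PCDerives G γ w` : configuration `γ` derives the empty configuration producing word `w`,
using production steps (at the head) and swap steps of independent adjacent nonterminals. -/
inductive PCDerives {α : Type} (G : PCGrammar α) : List G.V → List α → Prop
  | nil : PCDerives G [] []
  | prod {X : G.V} {a : α} {γ β : List G.V} {w : List α} :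
      (X, a, γ) ∈ G.prods → PCDerives G (γ ++ β) w → PCDerives G (X :: β) (a :: w)
  | swap {η β : List G.V} {X Y : G.V} {w : List α} :
      G.indep X Y → PCDerives G (η ++ Y :: X :: β) w → PCDerives G (η ++ X :: Y :: β) w

/-- The language generated by a PC-grammar. -/
def PCGrammar.lang {α : Type} (G : PCGrammar α) : Set (List α) :=
  {w | PCDerives G [G.start] w}

/-- The class of partially-commutative context-free languages. -/
def IsPCCFL {α : Type} (L : Set (List α)) : Prop :=
  ∃ G : PCGrammar α, G.lang = L

/-- The dependence relation (complement of independence) is transitive. -/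
def PCGrammar.depTransitive {α : Type} (G : PCGrammar α) : Prop :=
  ∀ X Y Z : G.V, ¬ G.indep X Y → ¬ G.indep Y Z → ¬ G.indep X Z

/-- The subclass of PCCFL given by grammars with transitive dependence. -/
def IsTrPCCFL {α : Type} (L : Set (List α)) : Prop :=
  ∃ G : PCGrammar α, G.depTransitive ∧ G.lang = L

/-- Terms of a PA-grammar (shuffle context-free grammar). -/
inductive PATerm (V : Type) : Type
  | eps : PATerm V
  | var (X : V) : PATerm V
  | seq (t u : PATerm V) : PATerm V
  | par (t u : PATerm V) : PATerm V

/-- Structural equivalence of PA-terms: associativity of both compositions,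
commutativity of parallel composition, and neutrality of the empty term. -/
inductive PAEq {V : Type} : PATerm V → PATerm V → Prop
  | refl (t : PATerm V) : PAEq t t
  | symm {t u : PATerm V} : PAEq t u → PAEq u t
  | trans {t u v : PATerm V} : PAEq t u → PAEq u v → PAEq t v
  | seq_assoc (t u v : PATerm V) : PAEq ((t.seq u).seq v) (t.seq (u.seq v))
  | par_assoc (t u v : PATerm V) : PAEq ((t.par u).par v) (t.par (u.par v))
  | par_comm (t u : PATerm V) : PAEq (t.par u) (u.par t)
  | seq_eps_left (t : PATerm V) : PAEq (PATerm.eps.seq t) t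
  | seq_eps_right (t : PATerm V) : PAEq (t.seq PATerm.eps) t
  | par_eps (t : PATerm V) : PAEq (t.par PATerm.eps) t
  | seq_congr {t t' u u' : PATerm V} : PAEq t t' → PAEq u u' → PAEq (t.seq u) (t'.seq u')
  | par_congr {t t' u u' : PATerm V} : PAEq t t' → PAEq u u' → PAEq (t.par u) (t'.par u')

/-- Single steps of a PA-grammar with production set `P`. -/
inductive PAStep {V α : Type} (P : Set (V × α × PATerm V)) : PATerm V → α → PATerm V → Prop
  | prod {X : V} {a : α} {t : PATerm V} : (X, a, t) ∈ P → PAStep P (PATerm.var X) a t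
  | seq_left {t t' u : PATerm V} {a : α} : PAStep P t a t' → PAStep P (t.seq u) a (t'.seq u)
  | par_left {t t' u : PATerm V} {a : α} : PAStep P t a t' → PAStep P (t.par u) a (t'.par u)
  | par_right {t u u' : PATerm V} {a : α} : PAStep P u a u' → PAStep P (t.par u) a (t.par u')

/-- `PAGen P t w` : term `t` derives the empty term producing word `w`
(terms are considered up to structural equivalence). -/
inductive PAGen {V α : Type} (P : Set (V × α × PATerm V)) : PATerm V → List α → Prop
  | done : PAGen P PATerm.eps []
  | eqv {t t' : PATerm V} {w : List α} : PAEq t t' → PAGen P t' w → PAGen P t w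
  | step {t t' : PATerm V} {a : α} {w : List α} :
      PAStep P t a t' → PAGen P t' w → PAGen P t (a :: w)

/-- A PA-grammar (shuffle context-free grammar). -/
structure PAGrammar (α : Type) : Type 1 where
  V : Type
  finV : Finite V
  start : V
  prods : Set (V × α × PATerm V)
  finP : prods.Finite

/-- The language generated by a PA-grammar. -/
def PAGrammar.lang {α : Type} (G : PAGrammar α) : Set (List α) :=
  {w | PAGen G.prods (PATerm.var G.start) w}

/-- The class of languages of PA-grammars (context-free grammars with shuffle). -/
def IsShuffleCFL {α : Type} (L : Set (List α)) : Prop :=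
  ∃ G : PAGrammar α, G.lang = L

/-- A single swap of two adjacent letters independent according to `J`. -/
inductive AdjSwap {α : Type} (J : α → α → Prop) : List α → List α → Prop
  | swap (x y : List α) {a b : α} : J a b → AdjSwap J (x ++ a :: b :: y) (x ++ b :: a :: y)

/-- Trace equivalence: finitely many swaps of adjacent independent letters. -/
def TraceEquiv {α : Type} (J : α → α → Prop) : List α → List α → Prop :=
  Relation.ReflTransGen (AdjSwap J)

/-- Trace closure of a language with respect to letter-independence `J`. -/
def traceClosure {α : Type} (J : α → α → Prop) (L : Set (List α)) : Set (List α) :=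
  {w | ∃ v ∈ L, TraceEquiv J v w}

/-- The class of trace closures of context-free languages. -/
def IsTraceCFL {α : Type} (L : Set (List α)) : Prop :=
  ∃ J : α → α → Prop, (∀ a b, J a b → J b a) ∧ (∀ a, ¬ J a a) ∧
    ∃ L₀ : Language α, L₀.IsContextFree ∧ traceClosure J L₀ = L

/-- `listPow s m` is the word `s^m`. -/
def listPow {α : Type} (s : List α) (m : ℕ) : List α :=
  (List.replicate m s).flatten

/-- The shuffle-pumping condition. -/
def ShufflePumping {α : Type} (L : Set (List α)) : Prop :=
  ∃ N : ℕ, ∀ w ∈ L, w.length > N →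
    ∃ x y z s t : List α,
      (∃ yt u : List α, IsInterleaving y t yt ∧ IsInterleaving (s ++ yt) z u ∧ w = x ++ u) ∧
      1 ≤ s.length ∧ (s ++ y ++ t).length ≤ N ∧
      ∀ m : ℕ, x ++ listPow s m ++ y ++ listPow t m ++ z ∈ L

/-- The concatenation-pumping condition. -/
def ConcatPumping {α : Type} (L : Set (List α)) : Prop :=
  ∃ N : ℕ, ∀ w ∈ L, w.length > N →
    ∃ x y z s t : List α,
      w = x ++ y ++ z ∧
      1 ≤ (s ++ t).length ∧ (s ++ t).length ≤ N ∧
      ∀ m : ℕ, x ++ listPow s m ++ y ++ listPow t m ++ z ∈ L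

/-!
A PA-grammar or a context-free grammar takes each of its words apart, down to the empty word, by
removing first letters, cutting and unshuffling, and only finitely many languages (those of its
terms, respectively of its sentential forms) occur as components.

The witness grammar has two independent stacks. It generates `aⁿcⁿfbⁿ` for `n ≥ 2`, and in words of
length greater than two there are as many `a`s as `b`s, as many `a`s as `c`s, and this also before
the letter `f`. In a decomposition of `aⁿcⁿfbⁿ`, follow the component containing `f` and some `a`.
Substituting other words for a component keeps the numbers of `a`, `b` and `c` equal, so for
each of the finitely many languages the differences of these numbers are bounded. The component
contains all `n` letters `c`, hence many `a`s, and loses neither `f` nor its last `a`: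

* removing a first letter removes one `a` at most;
* a cut between the `a`s and `f` would leave many `a`s without `b`s;
* nothing can be shuffled with `f`, since a letter moved across `f` breaks the balance before `f`.

So such a component never disappears, which is absurd.

The grammar also generates the words `xy` with `x < y` for a linear order of the letters, but not
`yx`. A trace closure containing these words allows no letters to commute, so it is context-free.
-/

variable {α : Type}

namespace IsInterleaving

variable {u v w x y : List α}

theorem comm (h : IsInterleaving u v w) : IsInterleaving v u w := by
  induction h with
  | nil => exact .nil
  | left _ ih => exact .right ih
  | right _ ih => exact .left ih

theorem perm (h : IsInterleaving u v w) : w.Perm (u ++ v) := by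
  induction h with
  | nil => exact .refl _
  | left _ ih => exact ih.cons _
  | right _ ih => exact (ih.cons _).trans List.perm_middle.symm

theorem nil_right : ∀ u : List α, IsInterleaving u [] u
  | [] => .nil
  | _ :: u => .left (nil_right u)

theorem nil_left (u : List α) : IsInterleaving [] u u :=
  (nil_right u).comm

theorem eq_of_nil_left (h : IsInterleaving [] v w) : w = v := by
  induction w generalizing v with
  | nil => cases h; rfl
  | cons a w ih => cases h with | right h => rw [ih h]

theorem eq_of_nil_right (h : IsInterleaving u [] w) : w = u :=
  h.comm.eq_of_nil_left

theorem append_append : ∀ p q u : List α, IsInterleaving u (p ++ q) (p ++ u ++ q)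
  | _ :: p, q, u => .right (append_append p q u)
  | [], q, _ :: u => .left (append_append [] q u)
  | [], q, [] => nil_left q

theorem assoc (h : IsInterleaving w x y) (h' : IsInterleaving u v w) :
    ∃ k, IsInterleaving v x k ∧ IsInterleaving u k y := by
  induction h generalizing u v with
  | nil => cases h'; exact ⟨[], .nil, .nil⟩
  | left _ ih =>
    cases h' with
    | left h' => obtain ⟨k, hvx, huk⟩ := ih h'; exact ⟨k, hvx, .left huk⟩
    | right h' => obtain ⟨k, hvx, huk⟩ := ih h'; exact ⟨_, .left hvx, .right huk⟩
  | right _ ih => obtain ⟨k, hvx, huk⟩ := ih h'; exact ⟨_, .right hvx, .right huk⟩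

end IsInterleaving

section Shuffle

variable (L K M : Set (List α))

theorem shuffleLang_comm : shuffleLang L K = shuffleLang K L :=
  have subset (L K : Set (List α)) : shuffleLang L K ⊆ shuffleLang K L :=
    fun _ ⟨u, hu, v, hv, h⟩ => ⟨v, hv, u, hu, h.comm⟩
  (subset L K).antisymm (subset K L)

theorem shuffleLang_assoc :
    shuffleLang (shuffleLang L K) M = shuffleLang L (shuffleLang K M) := by
  have subset (L K M : Set (List α)) :
      shuffleLang (shuffleLang L K) M ⊆ shuffleLang L (shuffleLang K M) := by
    rintro y ⟨w, ⟨u, hu, v, hv, huv⟩, x, hx, hwx⟩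
    obtain ⟨k, hvx, huk⟩ := hwx.assoc huv
    exact ⟨u, hu, k, ⟨v, hv, x, hx, hvx⟩, huk⟩
  refine (subset L K M).antisymm ?_
  rw [shuffleLang_comm L, shuffleLang_comm K, shuffleLang_comm _ M, shuffleLang_comm L]
  exact subset M K L

theorem shuffleLang_singleton_nil : shuffleLang L {[]} = L := by
  ext w
  constructor
  · rintro ⟨u, hu, v, rfl, h⟩
    rwa [h.eq_of_nil_right]
  · exact fun hw => ⟨w, hw, [], rfl, .nil_right w⟩

end Shuffle

/-! ### Decomposition over a finite family of languages -/

/-- `Decomposes 𝓕 K w`: the word `w` of `K` can be taken apart down to the empty word by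
removing a first letter, cutting and unshuffling, where each step replaces the current language by
members of `𝓕` whose recombination stays inside it. It abstracts derivation trees: only the
languages of the subtrees are remembered. -/
inductive Decomposes (𝓕 : Set (Set (List α))) : Set (List α) → List α → Prop
  | nil {K : Set (List α)} : [] ∈ K → Decomposes 𝓕 K []
  | cons {K K' : Set (List α)} {a : α} {w : List α} : K' ∈ 𝓕 → (a :: ·) '' K' ⊆ K →
      Decomposes 𝓕 K' w → Decomposes 𝓕 K (a :: w)
  | append {K K₁ K₂ : Set (List α)} {u v : List α} : K₁ ∈ 𝓕 → K₂ ∈ 𝓕 →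
      Set.image2 (· ++ ·) K₁ K₂ ⊆ K →
      Decomposes 𝓕 K₁ u → Decomposes 𝓕 K₂ v → Decomposes 𝓕 K (u ++ v)
  | shuffle {K K₁ K₂ : Set (List α)} {u v w : List α} : K₁ ∈ 𝓕 → K₂ ∈ 𝓕 →
      shuffleLang K₁ K₂ ⊆ K →
      Decomposes 𝓕 K₁ u → Decomposes 𝓕 K₂ v → IsInterleaving u v w → Decomposes 𝓕 K w

theorem Decomposes.mem {𝓕 : Set (Set (List α))} {K : Set (List α)} {w : List α}
    (h : Decomposes 𝓕 K w) : w ∈ K := by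
  induction h with
  | nil h => exact h
  | cons _ hK _ ih => exact hK ⟨_, ih, rfl⟩
  | append _ _ hK _ _ ihu ihv => exact hK ⟨_, ihu, _, ihv, rfl⟩
  | shuffle _ _ hK _ _ hi ihu ihv => exact hK ⟨_, ihu, _, ihv, hi⟩

/-- A language all of whose words decompose over one finite family of languages containing it:
the common consequence of being generated by a context-free grammar or by a PA-grammar. -/
def IsDecomposable (L : Set (List α)) : Prop :=
  ∃ 𝓕 : Set (Set (List α)), 𝓕.Finite ∧ L ∈ 𝓕 ∧ ∀ w ∈ L, Decomposes 𝓕 L w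

/-! ### Context-free languages -/

section ContextFree

variable {g : ContextFreeGrammar α}

/-- `Forest g l w`: the word `w` is the yield of a sequence of derivation trees of `g` whose roots
spell the sentential form `l`. -/
inductive Forest (g : ContextFreeGrammar α) : List (Symbol α g.NT) → List α → Prop
  | nil : Forest g [] []
  | terminal {a : α} {l : List (Symbol α g.NT)} {w : List α} :
      Forest g l w → Forest g (.terminal a :: l) (a :: w)
  | nonterminal {r : ContextFreeRule α g.NT} {l : List (Symbol α g.NT)} {u v : List α} :
      r ∈ g.rules → Forest g r.output u → Forest g l v →
      Forest g (.nonterminal r.input :: l) (u ++ v)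

namespace Forest

theorem append {l k : List (Symbol α g.NT)} {u v : List α} (hl : Forest g l u)
    (hk : Forest g k v) : Forest g (l ++ k) (u ++ v) := by
  induction hl with
  | nil => exact hk
  | terminal _ ih => exact .terminal ih
  | nonterminal hr ho _ _ ih => rw [List.append_assoc]; exact .nonterminal hr ho ih

theorem exists_of_append {l k : List (Symbol α g.NT)} {w : List α} (h : Forest g (l ++ k) w) :
    ∃ u v, w = u ++ v ∧ Forest g l u ∧ Forest g k v := by
  induction l generalizing w with
  | nil => exact ⟨[], w, rfl, .nil, h⟩
  | cons s l ih =>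
    cases h with
    | terminal h =>
      obtain ⟨u, v, rfl, hl, hk⟩ := ih h
      exact ⟨_ :: u, v, rfl, .terminal hl, hk⟩
    | nonterminal hr ho h =>
      obtain ⟨u, v, rfl, hl, hk⟩ := ih h
      exact ⟨_ ++ u, v, (List.append_assoc ..).symm, .nonterminal hr ho hl, hk⟩

theorem map_terminal : ∀ w : List α, Forest g (w.map .terminal) w
  | [] => .nil
  | _ :: w => .terminal (map_terminal w)

theorem derives {l : List (Symbol α g.NT)} {w : List α} (h : Forest g l w) :
    g.Derives l (w.map .terminal) := by
  induction h with
  | nil => exact Relation.ReflTransGen.refl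
  | terminal _ ih => exact ih.append_left [_]
  | nonterminal hr _ _ iho ihl =>
    rw [List.map_append]
    have hrule := ContextFreeGrammar.Produces.trans_derives ⟨_, hr, .input_output⟩ iho
    exact (hrule.append_right _).trans (ihl.append_left _)

theorem of_derives {l : List (Symbol α g.NT)} {w : List α}
    (h : g.Derives l (w.map .terminal)) : Forest g l w := by
  induction h using Relation.ReflTransGen.head_induction_on with
  | refl => exact map_terminal w
  | head h _ ih =>
    obtain ⟨r, hr, h⟩ := h
    obtain ⟨p, q, rfl, rfl⟩ := h.exists_parts
    obtain ⟨_, v, rfl, hpr, hq⟩ := exists_of_append ih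
    obtain ⟨u, m, rfl, hp, hr'⟩ := exists_of_append hpr
    have hroot := Forest.nonterminal hr hr' .nil
    rw [List.append_nil] at hroot
    exact (hp.append hroot).append hq

theorem decomposes {S : Set (List (Symbol α g.NT))} (hrule : ∀ r ∈ g.rules, r.output ∈ S)
    (htail : ∀ s l, s :: l ∈ S → l ∈ S) {l : List (Symbol α g.NT)} {w : List α}
    (h : Forest g l w) (hl : l ∈ S) :
    Decomposes ((fun l => {w | Forest g l w}) '' S) {w | Forest g l w} w := by
  induction h with
  | nil => exact .nil Forest.nil
  | terminal _ ih =>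
    have hl' := htail _ _ hl
    exact .cons ⟨_, hl', rfl⟩ (Set.image_subset_iff.mpr fun _ => Forest.terminal) (ih hl')
  | nonterminal hr _ _ iho ihl =>
    have hl' := htail _ _ hl
    refine .append ⟨_, hrule _ hr, rfl⟩ ⟨_, hl', rfl⟩ ?_ (iho (hrule _ hr)) (ihl hl')
    rintro _ ⟨u, hu, v, hv, rfl⟩
    exact .nonterminal hr hu hv

end Forest

theorem isDecomposable_of_isContextFree {L : Language α} (hL : L.IsContextFree) :
    IsDecomposable L := by
  obtain ⟨g, rfl⟩ := hL
  let outputs : Set (List (Symbol α g.NT)) :=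
    insert [.nonterminal g.initial] (ContextFreeRule.output '' g.rules)
  let S := {l | ∃ k ∈ outputs, l <:+ k}
  have hS : S.Finite := by
    have hout : outputs.Finite := (g.rules.finite_toSet.image _).insert _
    refine (hout.biUnion fun k _ => k.tails.finite_toSet).subset ?_
    rintro l ⟨k, hk, hl⟩
    exact Set.mem_biUnion hk ((List.mem_tails _ _).mpr hl)
  have hlang : g.language = {w | Forest g [.nonterminal g.initial] w} :=
    Set.ext fun _ => ⟨Forest.of_derives, Forest.derives⟩
  have hinit : [.nonterminal g.initial] ∈ S := ⟨_, Set.mem_insert _ _, List.suffix_rfl⟩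
  rw [hlang]
  refine ⟨_, hS.image fun l => {w | Forest g l w}, ⟨_, hinit, rfl⟩, fun w hw =>
    Forest.decomposes (fun r hr => ?_) (fun s l => ?_) hw hinit⟩
  · exact ⟨_, Set.mem_insert_of_mem _ ⟨r, hr, rfl⟩, List.suffix_rfl⟩
  · rintro ⟨k, hk, hl⟩
    exact ⟨k, hk, (List.suffix_cons s l).trans hl⟩

end ContextFree

/-! ### Languages of PA-grammars -/

section PA

variable {V : Type} {P : Set (V × α × PATerm V)}

/-- `PAYields P t w`: the compositional semantics of PA-terms, in which the word of a composite
term is put together from words of its components instead of being emitted step by step. -/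
inductive PAYields (P : Set (V × α × PATerm V)) : PATerm V → List α → Prop
  | eps : PAYields P .eps []
  | var {X : V} {a : α} {t : PATerm V} {w : List α} :
      (X, a, t) ∈ P → PAYields P t w → PAYields P (.var X) (a :: w)
  | seq {t u : PATerm V} {x y : List α} :
      PAYields P t x → PAYields P u y → PAYields P (t.seq u) (x ++ y)
  | par {t u : PATerm V} {x y w : List α} :
      IsInterleaving x y w → PAYields P t x → PAYields P u y → PAYields P (t.par u) w

/-- The set of words that a PA-term yields. -/
def PATerm.yield (P : Set (V × α × PATerm V)) (t : PATerm V) : Set (List α) :=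
  {w | PAYields P t w}

namespace PATerm

theorem yield_eps : (eps : PATerm V).yield P = {[]} :=
  Set.ext fun _ => ⟨fun h => by cases h; rfl, fun h => h ▸ PAYields.eps⟩

theorem yield_seq (t u : PATerm V) :
    (t.seq u).yield P = Set.image2 (· ++ ·) (t.yield P) (u.yield P) := by
  ext w
  constructor
  · rintro (_ | _ | ⟨ht, hu⟩)
    exact ⟨_, ht, _, hu, rfl⟩
  · rintro ⟨x, ht, y, hu, rfl⟩
    exact .seq ht hu

theorem yield_par (t u : PATerm V) :
    (t.par u).yield P = shuffleLang (t.yield P) (u.yield P) := by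
  ext w
  constructor
  · rintro (_ | _ | _ | ⟨hi, ht, hu⟩)
    exact ⟨_, ht, _, hu, hi⟩
  · rintro ⟨x, ht, y, hu, hi⟩
    exact .par hi ht hu

end PATerm

theorem PAEq.yield_eq {t t' : PATerm V} (h : PAEq t t') : t.yield P = t'.yield P := by
  induction h with
  | refl => rfl
  | symm _ ih => exact ih.symm
  | trans _ _ ih ih' => exact ih.trans ih'
  | seq_assoc =>
    simp only [PATerm.yield_seq]
    exact Set.image2_assoc List.append_assoc
  | par_assoc => simp only [PATerm.yield_par, shuffleLang_assoc]
  | par_comm => rw [PATerm.yield_par, PATerm.yield_par, shuffleLang_comm]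
  | seq_eps_left =>
    rw [PATerm.yield_seq, PATerm.yield_eps]
    exact Set.image2_left_identity List.nil_append _
  | seq_eps_right =>
    rw [PATerm.yield_seq, PATerm.yield_eps]
    exact Set.image2_right_identity List.append_nil _
  | par_eps => rw [PATerm.yield_par, PATerm.yield_eps, shuffleLang_singleton_nil]
  | seq_congr _ _ iht ihu => rw [PATerm.yield_seq, PATerm.yield_seq, iht, ihu]
  | par_congr _ _ iht ihu => rw [PATerm.yield_par, PATerm.yield_par, iht, ihu]

theorem PAStep.yields {t t' : PATerm V} {a : α} (h : PAStep P t a t') {w : List α}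
    (hw : PAYields P t' w) : PAYields P t (a :: w) := by
  induction h generalizing w with
  | prod h => exact .var h hw
  | seq_left _ ih => cases hw with | seq ht hu => exact .seq (ih ht) hu
  | par_left _ ih => cases hw with | par hi ht hu => exact .par (.left hi) (ih ht) hu
  | par_right _ ih => cases hw with | par hi ht hu => exact .par (.right hi) ht (ih hu)

namespace PAGen

theorem yields {t : PATerm V} {w : List α} (h : PAGen P t w) : PAYields P t w := by
  induction h with
  | done => exact .eps
  | eqv e _ ih =>
    change _ ∈ PATerm.yield P _
    rw [e.yield_eq]
    exact ih
  | step s _ ih => exact s.yields ih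

theorem eq_eps_of_nil {t : PATerm V} (h : PAGen P t []) : PAEq t .eps := by
  generalize hw : ([] : List α) = w at h
  induction h with
  | done => exact .refl _
  | eqv e _ ih => exact .trans e (ih hw)
  | step => cases hw

theorem exists_step_of_cons {t : PATerm V} {a : α} {w : List α} (h : PAGen P t (a :: w)) :
    ∃ t₁ t₂, PAEq t t₁ ∧ PAStep P t₁ a t₂ ∧ PAGen P t₂ w := by
  generalize hw : a :: w = w' at h
  induction h with
  | done => cases hw
  | eqv e _ ih =>
    obtain ⟨t₁, t₂, e', hstep, hgen⟩ := ih hw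
    exact ⟨t₁, t₂, .trans e e', hstep, hgen⟩
  | step s h => cases hw; exact ⟨_, _, .refl _, s, h⟩

theorem seq {t u : PATerm V} {x y : List α} (ht : PAGen P t x) (hu : PAGen P u y) :
    PAGen P (t.seq u) (x ++ y) := by
  induction ht with
  | done => exact .eqv (.seq_eps_left _) hu
  | eqv e _ ih => exact .eqv (.seq_congr e (.refl _)) ih
  | step s _ ih => exact .step (.seq_left s) ih

theorem par {t u : PATerm V} {x y w : List α} (hi : IsInterleaving x y w)
    (ht : PAGen P t x) (hu : PAGen P u y) : PAGen P (t.par u) w := by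
  induction hi generalizing t u with
  | nil =>
    exact .eqv (.trans (.par_congr ht.eq_eps_of_nil hu.eq_eps_of_nil) (.par_eps _)) .done
  | left _ ih =>
    obtain ⟨_, _, e, hstep, hgen⟩ := ht.exists_step_of_cons
    exact .eqv (.par_congr e (.refl _)) (.step (.par_left hstep) (ih hgen hu))
  | right _ ih =>
    obtain ⟨_, _, e, hstep, hgen⟩ := hu.exists_step_of_cons
    exact .eqv (.par_congr (.refl _) e) (.step (.par_right hstep) (ih ht hgen))

end PAGen

theorem PAYields.gen {t : PATerm V} {w : List α} (h : PAYields P t w) : PAGen P t w := by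
  induction h with
  | eps => exact .done
  | var h _ ih => exact .step (.prod h) ih
  | seq _ _ iht ihu => exact iht.seq ihu
  | par hi _ _ iht ihu => exact .par hi iht ihu

theorem PAGrammar.lang_eq_yield (G : PAGrammar α) :
    G.lang = (PATerm.var G.start).yield G.prods :=
  Set.ext fun _ => ⟨PAGen.yields, PAYields.gen⟩

/-- The set of subterms of a PA-term, including the term itself. -/
def PATerm.subterms : PATerm V → Set (PATerm V)
  | eps => {eps}
  | var X => {var X}
  | seq t u => insert (seq t u) (t.subterms ∪ u.subterms)
  | par t u => insert (par t u) (t.subterms ∪ u.subterms)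

namespace PATerm

theorem finite_subterms (t : PATerm V) : t.subterms.Finite := by
  induction t with
  | eps | var => exact Set.finite_singleton _
  | seq t u iht ihu | par t u iht ihu => exact (iht.union ihu).insert _

theorem self_mem_subterms (t : PATerm V) : t ∈ t.subterms := by
  cases t <;> simp [subterms]

theorem subterms_subset_of_mem {s t : PATerm V} (h : t ∈ s.subterms) :
    t.subterms ⊆ s.subterms := by
  induction s with
  | eps | var => cases h; rfl
  | seq s₁ s₂ ih₁ ih₂ | par s₁ s₂ ih₁ ih₂ =>
    rcases h with rfl | h | h
    · rfl
    · exact (ih₁ h).trans (Set.subset_union_left.trans (Set.subset_insert _ _))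
    · exact (ih₂ h).trans (Set.subset_union_right.trans (Set.subset_insert _ _))

end PATerm

theorem PAYields.decomposes {S : Set (PATerm V)} (hprod : ∀ p ∈ P, p.2.2 ∈ S)
    (hsub : ∀ t ∈ S, t.subterms ⊆ S) {t : PATerm V} {w : List α} (h : PAYields P t w)
    (ht : t ∈ S) : Decomposes (PATerm.yield P '' S) (t.yield P) w := by
  induction h with
  | eps => exact .nil PAYields.eps
  | var hp _ ih =>
    exact .cons ⟨_, hprod _ hp, rfl⟩ (Set.image_subset_iff.mpr fun _ => PAYields.var hp)
      (ih (hprod _ hp))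
  | @seq t u _ _ _ _ iht ihu =>
    have ht' : t ∈ S := hsub _ ht (.inr (.inl t.self_mem_subterms))
    have hu' : u ∈ S := hsub _ ht (.inr (.inr u.self_mem_subterms))
    exact .append ⟨t, ht', rfl⟩ ⟨u, hu', rfl⟩ (PATerm.yield_seq t u).ge (iht ht') (ihu hu')
  | @par t u _ _ _ hi _ _ iht ihu =>
    have ht' : t ∈ S := hsub _ ht (.inr (.inl t.self_mem_subterms))
    have hu' : u ∈ S := hsub _ ht (.inr (.inr u.self_mem_subterms))
    exact .shuffle ⟨t, ht', rfl⟩ ⟨u, hu', rfl⟩ (PATerm.yield_par t u).ge (iht ht') (ihu hu') hi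

theorem IsShuffleCFL.isDecomposable {L : Set (List α)} (hL : IsShuffleCFL L) :
    IsDecomposable L := by
  obtain ⟨G, rfl⟩ := hL
  let roots : Set (PATerm G.V) := insert (.var G.start) ((·.2.2) '' G.prods)
  let S := ⋃ t ∈ roots, t.subterms
  have hS : S.Finite := ((G.finP.image _).insert _).biUnion fun t _ => t.finite_subterms
  have root_mem {t : PATerm G.V} (ht : t ∈ roots) : t ∈ S :=
    Set.mem_biUnion ht t.self_mem_subterms
  have hsub : ∀ t ∈ S, t.subterms ⊆ S := by
    intro t ht
    obtain ⟨s, hs, hts⟩ := Set.mem_iUnion₂.mp ht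
    exact (PATerm.subterms_subset_of_mem hts).trans (Set.subset_biUnion_of_mem hs)
  have hstart : PATerm.var G.start ∈ S := root_mem (Set.mem_insert _ _)
  rw [G.lang_eq_yield]
  exact ⟨_, hS.image _, ⟨_, hstart, rfl⟩, fun w hw => PAYields.decomposes
    (fun p hp => root_mem (Set.mem_insert_of_mem _ ⟨p, hp, rfl⟩)) hsub hw hstart⟩

end PA

/-! ### Trace closures -/

theorem mem_traceClosure_of_adjSwap {J : α → α → Prop} {L : Set (List α)} {w w' : List α}
    (hw : w ∈ traceClosure J L) (h : AdjSwap J w w') : w' ∈ traceClosure J L := by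
  obtain ⟨v, hv, hvw⟩ := hw
  exact ⟨v, hv, hvw.tail h⟩

theorem traceClosure_eq_self {J : α → α → Prop} (hJ : ∀ p q, ¬ J p q) (L : Set (List α)) :
    traceClosure J L = L := by
  refine Set.Subset.antisymm ?_ fun w hw => ⟨w, hw, .refl⟩
  rintro w ⟨v, hv, h⟩
  cases h with
  | refl => exact hv
  | tail _ h => cases h with | swap _ _ h => exact absurd h (hJ _ _)

theorem IsTraceCFL.isContextFree {L : Set (List α)} (hL : IsTraceCFL L)
    (hpair : ∀ p q, p ≠ q → ¬ ([p, q] ∈ L ↔ [q, p] ∈ L)) : Language.IsContextFree L := by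
  obtain ⟨J, hsymm, hirr, L₀, hcf, rfl⟩ := hL
  have swap {p q : α} (h : J p q) (hw : [p, q] ∈ traceClosure J L₀) :
      [q, p] ∈ traceClosure J L₀ :=
    mem_traceClosure_of_adjSwap hw (.swap [] [] h)
  have hJ (p q : α) : ¬ J p q := fun h =>
    hpair p q (fun e => hirr q (e ▸ h)) ⟨swap h, swap (hsymm _ _ h)⟩
  have hself : traceClosure J (L₀ : Set (List α)) = L₀ := traceClosure_eq_self hJ L₀
  rw [hself]
  exact hcf

/-! ### The words `aⁿcⁿfbⁿ` -/

/-- The alphabet of the witness language. -/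
inductive Letter
  | a | c | f | b
  deriving DecidableEq

instance : Fintype Letter :=
  ⟨{.a, .c, .f, .b}, fun x => by cases x <;> decide⟩

/-- The order `a < c < f < b`, in which the words `blockWord n` are sorted. -/
instance : LinearOrder Letter :=
  LinearOrder.lift' Letter.ctorIdx fun x y h => by cases x <;> cases y <;> first | rfl | cases h

/-- The word `aⁿcⁿfbⁿ`. -/
def blockWord (n : ℕ) : List Letter :=
  List.replicate n .a ++ List.replicate n .c ++ .f :: List.replicate n .b

theorem pairwise_blockWord (n : ℕ) : (blockWord n).Pairwise (· ≤ ·) := by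
  simp only [blockWord, List.pairwise_append, List.pairwise_cons, List.pairwise_replicate,
    List.mem_replicate, List.mem_append, List.mem_cons]
  refine ⟨⟨.inr le_rfl, .inr le_rfl, ?_⟩, ⟨?_, .inr le_rfl⟩, ?_⟩
  · rintro _ ⟨-, rfl⟩ _ ⟨-, rfl⟩; decide
  · rintro _ ⟨-, rfl⟩; decide
  · rintro _ (⟨-, rfl⟩ | ⟨-, rfl⟩) _ (rfl | ⟨-, rfl⟩) <;> decide

theorem count_c_blockWord (n : ℕ) : (blockWord n).count .c = n := by
  simp [blockWord, List.count_replicate]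

theorem count_f_blockWord (n : ℕ) : (blockWord n).count .f = 1 := by
  simp [blockWord, List.count_replicate]

theorem length_blockWord (n : ℕ) : (blockWord n).length = 3 * n + 1 := by
  simp [blockWord]; omega

theorem le_of_append_eq_blockWord {n : ℕ} {u v : List Letter} (h : u ++ v = blockWord n)
    {p q : Letter} (hp : p ∈ u) (hq : q ∈ v) : p ≤ q :=
  (List.pairwise_append.mp (h ▸ pairwise_blockWord n)).2.2 p hp q hq

section Excess

variable [DecidableEq α] (x y : α)

/-- The number of occurrences of `x` minus the number of occurrences of `y`. -/
def excess (w : List α) : ℤ := w.count x - w.count y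

theorem excess_append (u v : List α) : excess x y (u ++ v) = excess x y u + excess x y v := by
  simp only [excess, List.count_append]; omega

theorem excess_cons (z : α) (w : List α) :
    excess x y (z :: w) = excess x y [z] + excess x y w :=
  excess_append x y [z] w

theorem abs_excess_le_length (w : List α) : |excess x y w| ≤ w.length := by
  have hx := w.count_le_length (a := x)
  have hy := w.count_le_length (a := y)
  rw [excess, abs_le]
  omega

end Excess

/-! ### Contexts -/

/-- Every word of `K` becomes a word of `L` when placed between `x` and `z`. -/
def IsContext (L K : Set (List α)) (x z : List α) : Prop :=
  ∀ u ∈ K, x ++ u ++ z ∈ L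

/-- On members of `𝓕` that embed into `L` through some context, `φ` is bounded by `D`. -/
def BoundedInContexts (L : Set (List α)) (𝓕 : Set (Set (List α))) (φ : List α → ℤ) (D : ℕ) :
    Prop :=
  ∀ K ∈ 𝓕, ∀ x z, IsContext L K x z → ∀ u ∈ K, |φ u| ≤ D

theorem exists_boundedInContexts {L : Set (List α)} {𝓕 : Set (Set (List α))} (h𝓕 : 𝓕.Finite)
    {φ : List α → ℤ} (hφ : ∀ u v, φ (u ++ v) = φ u + φ v) {B : ℤ} (hB : ∀ w ∈ L, |φ w| ≤ B) :
    ∃ D, BoundedInContexts L 𝓕 φ D := by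
  have bound (K : Set (List α)) : ∃ D : ℕ, ∀ x z, IsContext L K x z → ∀ u ∈ K, |φ u| ≤ D := by
    by_cases h : ∃ x z, IsContext L K x z
    · obtain ⟨x, z, hxz⟩ := h
      refine ⟨(B + |φ x| + |φ z|).toNat, fun _ _ _ u hu => ?_⟩
      have hw := hB _ (hxz u hu)
      rw [hφ, hφ] at hw
      refine le_trans ?_ (Int.self_le_toNat _)
      grind
    · exact ⟨0, fun x z hxz => absurd ⟨x, z, hxz⟩ h⟩
  choose D hD using bound
  obtain ⟨M, hM⟩ := (h𝓕.image D).bddAbove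
  exact ⟨M, fun K hK x z hxz u hu => (hD K x z hxz u hu).trans
    (Int.ofNat_le.mpr (hM ⟨K, hK, rfl⟩))⟩

/-! ### The words `aⁿcⁿfbⁿ` do not decompose -/

/-- The constraints on the order and number of letters satisfied by the words of length greater
than two of the witness language. -/
structure IsBalanced (w : List Letter) : Prop where
  excess_a_b : excess .a .b w = 0
  excess_a_c : excess .a .c w = 0
  excess_before_f : ∀ p q, w = p ++ .f :: q → excess .a .c p = 0
  a_notMem_after_b : ∀ p q, w = p ++ .b :: q → .a ∉ q

/-- The language `K` embeds into `L` through a context that places its word `v` inside `aⁿcⁿfbⁿ`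
so as to cover the letter `f` and at least one `a`. -/
def IsCritical (L : Set (List Letter)) (n : ℕ) (K : Set (List Letter)) (v : List Letter) : Prop :=
  ∃ x z, IsContext L K x z ∧ x ++ v ++ z = blockWord n ∧ .f ∈ v ∧ .a ∈ v

section Critical

variable {L K K₁ K₂ : Set (List Letter)} {𝓕 : Set (Set (List Letter))} {n D E : ℕ}
  {x z v v₁ v₂ : List Letter}

theorem count_c_of_append_eq_blockWord (h : x ++ v ++ z = blockWord n) (hf : .f ∈ v) (ha : .a ∈ v) :
    v.count .c = n := by
  have hx : .c ∉ x := fun hc =>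
    absurd (le_of_append_eq_blockWord ((List.append_assoc x v z).symm.trans h) hc
      (List.mem_append_left z ha)) (by decide)
  have hz : .c ∉ z := fun hc =>
    absurd (le_of_append_eq_blockWord h (List.mem_append_right x hf) hc) (by decide)
  have hcount := count_c_blockWord n
  rwa [← h, List.count_append, List.count_append, List.count_eq_zero.mpr hx,
    List.count_eq_zero.mpr hz, zero_add, add_zero] at hcount

theorem IsCritical.le_count_a (h : IsCritical L n K v) (hK : K ∈ 𝓕) (hv : v ∈ K)
    (hE : BoundedInContexts L 𝓕 (excess .a .c) E) : n ≤ v.count .a + E := by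
  obtain ⟨x, z, hxz, hw, hf, ha⟩ := h
  have hbound := abs_le.mp (hE K hK x z hxz v hv)
  rw [excess, count_c_of_append_eq_blockWord hw hf ha] at hbound
  omega

theorem IsCritical.of_cons {l : Letter} (h : IsCritical L n K (l :: v))
    (hK : (l :: ·) '' K₁ ⊆ K) (hcount : 2 ≤ (l :: v).count .a) : IsCritical L n K₁ v := by
  obtain ⟨x, z, hxz, hw, hf, -⟩ := h
  have ha : .a ∈ v := by
    rw [List.count_cons] at hcount
    exact List.count_pos_iff.mp (by split at hcount <;> omega)
  have hl : l ≠ .f := by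
    rintro rfl
    have happend : (x ++ [.f]) ++ (v ++ z) = blockWord n := by simpa using hw
    have hfx : .f ∈ x ++ [.f] := List.mem_append_right x (List.mem_singleton_self _)
    exact absurd (le_of_append_eq_blockWord happend hfx (List.mem_append_left z ha)) (by decide)
  refine ⟨x ++ [l], z, fun u hu => ?_, by simpa using hw, ?_, ha⟩
  · simpa using hxz (l :: u) (hK ⟨u, hu, rfl⟩)
  · exact (List.mem_cons.mp hf).resolve_left (Ne.symm hl)

theorem IsCritical.of_append (h : IsCritical L n K (v₁ ++ v₂)) (h₁ : K₁ ∈ 𝓕) (hv₁ : v₁ ∈ K₁)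
    (hv₂ : v₂ ∈ K₂) (hK : Set.image2 (· ++ ·) K₁ K₂ ⊆ K)
    (hD : BoundedInContexts L 𝓕 (excess .a .b) D) (hcount : D < (v₁ ++ v₂).count .a) :
    IsCritical L n K₁ v₁ ∨ IsCritical L n K₂ v₂ := by
  obtain ⟨x, z, hxz, hw, hf, ha⟩ := h
  have hctx₁ : IsContext L K₁ x (v₂ ++ z) := fun u hu => by
    simpa using hxz _ (hK ⟨u, hu, v₂, hv₂, rfl⟩)
  have hctx₂ : IsContext L K₂ (x ++ v₁) z := fun u hu => by
    simpa using hxz _ (hK ⟨v₁, hv₁, u, hu, rfl⟩)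
  have hw₁ : x ++ v₁ ++ (v₂ ++ z) = blockWord n := by simpa using hw
  have hw₂ : x ++ v₁ ++ v₂ ++ z = blockWord n := by simpa using hw
  have le {p q : Letter} (hp : p ∈ v₁) (hq : q ∈ v₂) : p ≤ q :=
    le_of_append_eq_blockWord hw₁ (List.mem_append_right x hp) (List.mem_append_left z hq)
  by_cases hf₁ : .f ∈ v₁
  · refine .inl ⟨x, v₂ ++ z, hctx₁, hw₁, hf₁, ?_⟩
    exact (List.mem_append.mp ha).resolve_right fun h => absurd (le hf₁ h) (by decide)
  have hf₂ : .f ∈ v₂ := (List.mem_append.mp hf).resolve_left hf₁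
  refine .inr ⟨x ++ v₁, z, hctx₂, hw₂, hf₂, ?_⟩
  by_contra ha₂
  have hb₁ : .b ∉ v₁ := fun h => absurd (le h hf₂) (by decide)
  have hbound := abs_le.mp (hD K₁ h₁ x _ hctx₁ v₁ hv₁)
  rw [List.count_append, List.count_eq_zero.mpr ha₂] at hcount
  rw [excess, List.count_eq_zero.mpr hb₁] at hbound
  omega

theorem excess_singleton_eq_zero_of_forall_isBalanced {y y' : List Letter} {l : Letter}
    (h : ∀ u, IsInterleaving (y ++ .f :: y') v₂ u → IsBalanced (x ++ u ++ z)) (hl : l ∈ v₂) :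
    excess .a .c [l] = 0 := by
  have excess_eq (p q : List Letter) (hpq : v₂ = p ++ q) : excess .a .c (x ++ p ++ y) = 0 := by
    subst hpq
    have hu := h _ (.append_append p q (y ++ .f :: y'))
    exact hu.excess_before_f _ (y' ++ q ++ z) (by simp)
  obtain ⟨p, q, rfl⟩ := List.append_of_mem hl
  have before := excess_eq p _ rfl
  have after := excess_eq (p ++ [l]) q (by simp)
  simp only [excess_append] at before after
  omega

theorem b_notMem_of_forall_isBalanced (h : ∀ u, IsInterleaving v₁ v₂ u → IsBalanced (x ++ u ++ z))
    (ha : .a ∈ v₁) : .b ∉ v₂ := fun hb => by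
  obtain ⟨p, q, rfl⟩ := List.append_of_mem hb
  have hu := IsInterleaving.append_append (p ++ [.b]) q v₁
  rw [List.append_assoc p] at hu
  exact (h _ hu).a_notMem_after_b (x ++ p) (v₁ ++ q ++ z) (by simp)
    (List.mem_append_left z (List.mem_append_left q ha))

/-- Whatever precedes `f` in an interleaving has as many `a`s as `c`s, so letters of `v₂`, which
can be moved across `f`, are neither `a` nor `c`; a `b` of `v₂` could be moved before an `a`. -/
theorem eq_nil_of_forall_isBalanced (hv : IsInterleaving v₁ v₂ v)
    (h : ∀ u, IsInterleaving v₁ v₂ u → IsBalanced (x ++ u ++ z))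
    (hw : x ++ v ++ z = blockWord n) (hf : .f ∈ v₁) (ha : .a ∈ v) : v₂ = [] := by
  obtain ⟨y, y', rfl⟩ := List.append_of_mem hf
  have excess_eq {l : Letter} (hl : l ∈ v₂) : excess .a .c [l] = 0 :=
    excess_singleton_eq_zero_of_forall_isBalanced h hl
  have ha₂ : .a ∉ v₂ := fun hl => absurd (excess_eq hl) (by decide)
  have hc₂ : .c ∉ v₂ := fun hl => absurd (excess_eq hl) (by decide)
  have hf₂ : .f ∉ v₂ := fun hl => by
    have hcount := congrArg (List.count .f) hw
    have hpos := List.count_pos_iff.mpr hl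
    rw [count_f_blockWord] at hcount
    simp only [List.count_append, hv.perm.count_eq, List.count_cons_self] at hcount
    omega
  have ha₁ := (List.mem_append.mp (hv.perm.mem_iff.mp ha)).resolve_right ha₂
  have hb₂ : .b ∉ v₂ := b_notMem_of_forall_isBalanced h ha₁
  refine List.eq_nil_iff_forall_not_mem.mpr fun l hl => ?_
  cases l <;> contradiction

theorem IsCritical.of_shuffle (h : IsCritical L n K v)
    (hL : ∀ w ∈ L, 2 < w.length → IsBalanced w) (hn : 1 ≤ n)
    (hv₁ : v₁ ∈ K₁) (hv₂ : v₂ ∈ K₂) (hK : shuffleLang K₁ K₂ ⊆ K) (hv : IsInterleaving v₁ v₂ v) :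
    IsCritical L n K₁ v₁ ∨ IsCritical L n K₂ v₂ := by
  have of_mem_left {K₁ K₂ : Set (List Letter)} {v₁ v₂ : List Letter} (hv₁ : v₁ ∈ K₁)
      (hv₂ : v₂ ∈ K₂) (hK : shuffleLang K₁ K₂ ⊆ K) (hv : IsInterleaving v₁ v₂ v)
      (hf : .f ∈ v₁) : IsCritical L n K₁ v₁ := by
    obtain ⟨x, z, hxz, hw, -, ha⟩ := h
    have balanced (u : List Letter) (hu : IsInterleaving v₁ v₂ u) : IsBalanced (x ++ u ++ z) := by
      refine hL _ (hxz u (hK ⟨v₁, hv₁, v₂, hv₂, hu⟩)) ?_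
      have hlen : (x ++ u ++ z).length = (blockWord n).length := by
        simp only [← hw, List.length_append, (hu.perm.trans hv.perm.symm).length_eq]
      rw [hlen, length_blockWord]
      omega
    obtain rfl := eq_nil_of_forall_isBalanced hv balanced hw hf ha
    obtain rfl := hv.eq_of_nil_right
    exact ⟨x, z, fun u hu => hxz u (hK ⟨u, hu, [], hv₂, .nil_right u⟩), hw, hf, ha⟩
  obtain ⟨-, -, -, -, hf, -⟩ := id h
  rcases List.mem_append.mp (hv.perm.mem_iff.mp hf) with hf | hf
  · exact .inl (of_mem_left hv₁ hv₂ hK hv hf)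
  · exact .inr (of_mem_left hv₂ hv₁ (shuffleLang_comm K₁ K₂ ▸ hK) hv.comm hf)

theorem Decomposes.not_isCritical (h : Decomposes 𝓕 K v) (hK : K ∈ 𝓕)
    (hL : ∀ w ∈ L, 2 < w.length → IsBalanced w)
    (hD : BoundedInContexts L 𝓕 (excess .a .b) D) (hE : BoundedInContexts L 𝓕 (excess .a .c) E)
    (hn : D + E + 2 ≤ n) : ¬ IsCritical L n K v := by
  induction h with
  | nil => exact fun ⟨_, _, _, _, hf, _⟩ => absurd hf List.not_mem_nil
  | cons hK' hsub h ih =>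
    intro hcrit
    have hcount := hcrit.le_count_a hK (Decomposes.cons hK' hsub h).mem hE
    exact ih hK' (hcrit.of_cons hsub (by omega))
  | append h₁ h₂ hsub hu hv ihu ihv =>
    intro hcrit
    have hcount := hcrit.le_count_a hK (Decomposes.append h₁ h₂ hsub hu hv).mem hE
    exact (hcrit.of_append h₁ hu.mem hv.mem hsub hD (by omega)).elim (ihu h₁) (ihv h₂)
  | shuffle h₁ h₂ hsub hu hv hi ihu ihv =>
    intro hcrit
    exact (hcrit.of_shuffle hL (by omega) hu.mem hv.mem hsub hi).elim (ihu h₁) (ihv h₂)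

theorem not_isDecomposable_of_isBalanced (hL : ∀ w ∈ L, 2 < w.length → IsBalanced w)
    (hblock : ∀ n, 2 ≤ n → blockWord n ∈ L) : ¬ IsDecomposable L := by
  rintro ⟨𝓕, h𝓕, hL𝓕, hdec⟩
  have exists_bound {y : Letter} (h : ∀ w ∈ L, 2 < w.length → excess .a y w = 0) :
      ∃ D, BoundedInContexts L 𝓕 (excess .a y) D := by
    refine exists_boundedInContexts h𝓕 (excess_append .a y) (B := 2) fun w hw => ?_
    by_cases hlen : 2 < w.length
    · rw [h w hw hlen, abs_zero]
      exact zero_le_two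
    · have := abs_excess_le_length .a y w
      omega
  obtain ⟨D, hD⟩ := exists_bound fun w hw hlen => (hL w hw hlen).excess_a_b
  obtain ⟨E, hE⟩ := exists_bound fun w hw hlen => (hL w hw hlen).excess_a_c
  have hcrit : IsCritical L (D + E + 2) L (blockWord (D + E + 2)) :=
    ⟨[], [], fun u hu => by simpa using hu, by simp, by simp [blockWord], by simp [blockWord]⟩
  have hmem := hblock (D + E + 2) (Nat.le_add_left 2 _)
  exact (hdec _ hmem).not_isCritical hL𝓕 hL hD hE le_rfl hcrit

end Critical

/-! ### Derivations of PC-grammars up to trace equivalence -/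

namespace TraceEquiv

variable {J : α → α → Prop} {u v : List α}

theorem symm (hJ : ∀ p q, J p q → J q p) (h : TraceEquiv J u v) : TraceEquiv J v u := by
  have : Std.Symm (AdjSwap J) := ⟨fun _ _ ⟨x, y, hab⟩ => .swap x y (hJ _ _ hab)⟩
  exact Relation.ReflTransGen.stdSymm.symm _ _ h

theorem cons (a : α) (h : TraceEquiv J u v) : TraceEquiv J (a :: u) (a :: v) :=
  h.lift (a :: ·) fun _ _ ⟨x, y, hab⟩ => .swap (a :: x) y hab

theorem append_cons_comm {a : α} : ∀ {u : List α} (v : List α), (∀ b ∈ u, J b a) →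
    TraceEquiv J (u ++ a :: v) (a :: (u ++ v))
  | [], _, _ => .refl
  | b :: u, v, hu => by
    have h := append_cons_comm v fun c hc => hu c (List.mem_cons_of_mem b hc)
    exact (h.cons b).tail (.swap [] (u ++ v) (hu b List.mem_cons_self))

end TraceEquiv

namespace PCDerives

variable {G : PCGrammar α} {γ δ : List G.V} {w : List α}

theorem of_traceEquiv (h : TraceEquiv G.indep γ δ) (hδ : PCDerives G δ w) : PCDerives G γ w := by
  induction h using Relation.ReflTransGen.head_induction_on with
  | refl => exact hδ
  | head h _ ih => cases h with | swap _ _ h => exact .swap h ih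

theorem nil_iff : PCDerives G [] w ↔ w = [] := by
  refine ⟨fun h => ?_, fun h => h ▸ .nil⟩
  generalize hγ : ([] : List G.V) = γ at h
  cases h <;> simp_all

theorem singleton_iff {X : G.V} : PCDerives G [X] w ↔
    ∃ a γ v, (X, a, γ) ∈ G.prods ∧ PCDerives G γ v ∧ w = a :: v := by
  constructor
  · intro h
    generalize hγ : [X] = γ at h
    cases h with
    | nil => cases hγ
    | prod hp h =>
      cases hγ
      exact ⟨_, _, _, hp, by rwa [List.append_nil] at h, rfl⟩
    | swap =>
      have := congrArg List.length hγ
      simp at this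
      omega
  · rintro ⟨a, γ, v, hp, h, rfl⟩
    exact .prod hp (by rwa [List.append_nil])

end PCDerives

/-! ### The witness grammar -/

/-- The nonterminals of the witness grammar. -/
inductive Nonterminal
  | start
  | spine
  | emit (x : Letter)
  deriving Fintype

/-- The nonterminals forming one of the two classes of the dependence relation: the configuration
restricted to this class is a stack, independent of the stack formed by the other class. -/
def onCounter : Nonterminal → Bool
  | .emit .c | .emit .f => true
  | _ => false

/-- The productions of the witness grammar. -/
inductive Production : Nonterminal → Letter → List Nonterminal → Prop
  | expand : Production .start .a [.spine, .emit .b, .emit .c, .emit .f]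
  | grow : Production .spine .a [.spine, .emit .b, .emit .c]
  | finish : Production .spine .a [.emit .b, .emit .c]
  | emit (x : Letter) : Production (.emit x) x []
  | pair {x y : Letter} : x < y → Production .start x [.emit y]

/-- The witness grammar. After `expand`, each `a` pushes a `b` onto one stack and a `c` onto the
independent counter stack, which has `f` at its bottom and can be popped at any time. The
productions `pair` add the words `xy` with `x < y`, which prevent any two letters from commuting. -/
abbrev counterGrammar : PCGrammar Letter where
  V := Nonterminal
  finV := inferInstance
  start := .start
  prods := {p | Production p.1 p.2.1 p.2.2}
  finP := by
    have hfin := (Set.finite_univ (α := Nonterminal)).prod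
      ((Set.finite_univ (α := Letter)).prod (List.finite_length_le Nonterminal 4))
    refine hfin.subset ?_
    rintro ⟨X, l, γ⟩ h
    refine ⟨Set.mem_univ X, Set.mem_univ l, ?_⟩
    cases (show Production X l γ from h) <;> simp
  indep X Y := onCounter X ≠ onCounter Y
  indep_symm := Ne.symm
  indep_irrefl _ h := h rfl

theorem depTransitive_counterGrammar : counterGrammar.depTransitive :=
  fun _ _ _ hXY hYZ => not_not.mpr ((not_not.mp hXY).trans (not_not.mp hYZ))

theorem Production.pcDerives {X : Nonterminal} {l : Letter} {γ β : List Nonterminal}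
    {w : List Letter} (h : Production X l γ) (hw : PCDerives counterGrammar (γ ++ β) w) :
    PCDerives counterGrammar (X :: β) (l :: w) :=
  .prod h hw

/-- `Run s k σ w`: the word `w` is generated from a configuration whose counter stack emits `σ` and
whose other stack is `k` times `emit b`, below a `spine` if `s` is true. -/
inductive Run : Bool → ℕ → List Letter → List Letter → Prop
  | nil : Run false 0 [] []
  | grow {k : ℕ} {σ w : List Letter} : Run true (k + 1) (.c :: σ) w → Run true k σ (.a :: w)
  | finish {k : ℕ} {σ w : List Letter} : Run false (k + 1) (.c :: σ) w → Run true k σ (.a :: w)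
  | emit_b {k : ℕ} {σ w : List Letter} : Run false k σ w → Run false (k + 1) σ (.b :: w)
  | pop {s : Bool} {k : ℕ} {x : Letter} {σ w : List Letter} : onCounter (.emit x) →
      Run s k σ w → Run s k (x :: σ) (x :: w)

/-- The configuration `γ` is an arbitrary interleaving of the two stacks described by `s`, `k` and
`σ` as in `Run`. -/
inductive Encodes : List Nonterminal → Bool → ℕ → List Letter → Prop
  | nil : Encodes [] false 0 []
  | spine {β : List Nonterminal} {k : ℕ} {σ : List Letter} :
      Encodes β false k σ → Encodes (.spine :: β) true k σ
  | emit_b {β : List Nonterminal} {k : ℕ} {σ : List Letter} :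
      Encodes β false k σ → Encodes (.emit .b :: β) false (k + 1) σ
  | counter {β : List Nonterminal} {s : Bool} {k : ℕ} {x : Letter} {σ : List Letter} :
      onCounter (.emit x) → Encodes β s k σ → Encodes (.emit x :: β) s k (x :: σ)

section Grammar

variable {s : Bool} {k : ℕ} {σ w : List Letter}

theorem Encodes.swap {X Y : Nonterminal} (hXY : onCounter X ≠ onCounter Y)
    {η β : List Nonterminal} (h : Encodes (η ++ X :: Y :: β) s k σ) :
    Encodes (η ++ Y :: X :: β) s k σ := by
  induction η generalizing s k σ with
  | nil =>
    cases h with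
    | spine h => cases h with
      | emit_b => exact absurd rfl hXY
      | counter hx h => exact .counter hx h.spine
    | emit_b h => cases h with
      | emit_b => exact absurd rfl hXY
      | counter hx h => exact .counter hx h.emit_b
    | counter hx h => cases h with
      | spine h => exact .spine (h.counter hx)
      | emit_b h => exact .emit_b (h.counter hx)
      | counter hy => exact absurd (hx.trans hy.symm) hXY
  | cons Z η ih =>
    cases h with
    | spine h => exact (ih h).spine
    | emit_b h => exact (ih h).emit_b
    | counter hx h => exact (ih h).counter hx

theorem Encodes.run {γ : List counterGrammar.V} (hγ : Encodes γ s k σ)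
    (h : PCDerives counterGrammar γ w) : Run s k σ w := by
  induction h generalizing s k σ with
  | nil => cases hγ; exact .nil
  | @prod X l γ _ _ hp _ ih =>
    cases (show Production X l γ from hp) with
    | expand | pair => cases hγ
    | grow => cases hγ with | spine hγ => exact .grow (ih (.spine (.emit_b (.counter rfl hγ))))
    | finish => cases hγ with | spine hγ => exact .finish (ih (.emit_b (.counter rfl hγ)))
    | emit => cases hγ with
      | emit_b hγ => exact .emit_b (ih hγ)
      | counter hx hγ => exact .pop hx (ih hγ)
  | swap hXY _ ih => exact ih (hγ.swap hXY)

namespace Run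

/-- The configuration encoding `s`, `k` and `σ` in which the counter stack comes last. -/
def configuration (s : Bool) (k : ℕ) (σ : List Letter) : List Nonterminal :=
  (bif s then [.spine] else []) ++ List.replicate k (.emit .b) ++ σ.map .emit

theorem pcDerives (h : Run s k σ w) : PCDerives counterGrammar (configuration s k σ) w := by
  have replicate_indep {k : ℕ} : ∀ X ∈ List.replicate k (Nonterminal.emit .b),
      counterGrammar.indep X (.emit .c) := fun X hX => by
    rw [List.eq_of_mem_replicate hX]; decide
  have push_c (k : ℕ) (σ : List Letter) : TraceEquiv counterGrammar.indep
      (.emit .c :: (List.replicate k (.emit .b) ++ σ.map .emit))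
      (List.replicate k (.emit .b) ++ (Letter.c :: σ).map .emit) :=
    (TraceEquiv.append_cons_comm _ replicate_indep).symm fun _ _ => Ne.symm
  induction h with
  | nil => exact .nil
  | @grow k σ _ _ ih =>
    exact Production.grow.pcDerives (β := List.replicate k (.emit .b) ++ σ.map .emit)
      (.of_traceEquiv (((push_c k σ).cons (.emit .b)).cons .spine) ih)
  | @finish k σ _ _ ih =>
    exact Production.finish.pcDerives (β := List.replicate k (.emit .b) ++ σ.map .emit)
      (.of_traceEquiv ((push_c k σ).cons (.emit .b)) ih)
  | emit_b _ ih => exact (Production.emit .b).pcDerives ih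
  | @pop s k x _ _ hx _ ih =>
    refine .of_traceEquiv (TraceEquiv.append_cons_comm _ fun X hX => ?_)
      ((Production.emit x).pcDerives ih)
    have hX : onCounter X = false := by
      rcases List.mem_append.mp hX with hX | hX
      · cases s <;> simp_all [onCounter]
      · rw [List.eq_of_mem_replicate hX]; rfl
    exact hX.trans_ne (hx ▸ Bool.false_ne_true)

theorem mem {x : Letter} (h : Run s k σ w) (hx : x ∈ w) :
    x ∈ σ ∨ x = .b ∨ s = true ∧ (x = .a ∨ x = .c) := by
  induction h with
  | nil => cases hx
  | grow _ ih | finish _ ih | emit_b _ ih | pop _ _ ih => grind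

theorem length_le (h : Run s k σ w) : k + σ.length ≤ w.length := by
  induction h with
  | nil => exact le_rfl
  | grow _ ih | finish _ ih | emit_b _ ih | pop _ _ ih =>
    simp only [List.length_cons] at ih ⊢
    omega

theorem excess_a_b (h : Run s k σ w) : excess .a .b w = excess .a .b σ - k := by
  have excess_a : excess Letter.a .b [.a] = 1 := rfl
  have excess_b : excess Letter.a .b [.b] = -1 := rfl
  have excess_c : excess Letter.a .b [.c] = 0 := rfl
  induction h with
  | nil => rfl
  | @grow k σ w _ ih | @finish k σ w _ ih =>
    rw [excess_cons, ih, excess_cons .a .b .c σ, excess_a, excess_c]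
    push_cast
    ring
  | emit_b _ ih =>
    rw [excess_cons, ih, excess_b]
    push_cast
    ring
  | @pop s k x σ w _ _ ih => rw [excess_cons, ih, excess_cons .a .b x σ, add_sub_assoc]

theorem excess_a_c (h : Run s k σ w) : excess .a .c w = excess .a .c σ := by
  induction h with
  | nil => rfl
  | grow _ ih | finish _ ih => rw [excess_cons, ih, ← excess_cons]; simp [excess]
  | emit_b _ ih => rw [excess_cons, ih]; simp [excess]
  | pop _ _ ih => rw [excess_cons, ih, ← excess_cons]

theorem excess_before_f {ρ ρ' p q : List Letter} (h : Run s k σ w) (hσ : σ = ρ ++ .f :: ρ')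
    (hw : w = p ++ .f :: q) (hρ : .f ∉ ρ) (hρ' : .f ∉ ρ') :
    excess .a .c p = excess .a .c ρ := by
  have excess_a : excess Letter.a .c [.a] = 1 := rfl
  have excess_b : excess Letter.a .c [.b] = 0 := rfl
  have excess_c : excess Letter.a .c [.c] = -1 := rfl
  induction h generalizing ρ p with
  | nil => simp at hσ
  | grow _ ih | finish _ ih =>
    obtain ⟨p, rfl, rfl⟩ := (List.cons_eq_append_iff.mp hw).resolve_left (by simp)
    have hp := ih (ρ := .c :: ρ) (congrArg (.c :: ·) hσ) rfl (by simp [hρ])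
    rw [excess_cons] at hp ⊢
    omega
  | emit_b _ ih =>
    obtain ⟨p, rfl, rfl⟩ := (List.cons_eq_append_iff.mp hw).resolve_left (by simp)
    rw [excess_cons, ih hσ rfl hρ, excess_b, zero_add]
  | @pop s k x σ w _ h ih =>
    rcases List.cons_eq_append_iff.mp hσ with ⟨rfl, hx⟩ | ⟨ρ, rfl, rfl⟩
    · obtain ⟨rfl, rfl⟩ := List.cons.inj hx
      rcases List.cons_eq_append_iff.mp hw with ⟨rfl, -⟩ | ⟨p, -, rfl⟩
      · rfl
      · have hf := h.mem (x := .f) (List.mem_append_right p List.mem_cons_self)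
        exact absurd (hf.resolve_right (by simp)) hρ'
    · rcases List.cons_eq_append_iff.mp hw with ⟨rfl, hx⟩ | ⟨p, rfl, rfl⟩
      · exact absurd (List.cons.inj hx).1 fun h => hρ (h ▸ List.mem_cons_self)
      · rw [excess_cons, ih rfl rfl (fun h => hρ (List.mem_cons_of_mem x h)), ← excess_cons]

theorem a_notMem_after_b {p q : List Letter} (h : Run s k σ w) (hw : w = p ++ .b :: q)
    (ha : .a ∉ σ) (hb : .b ∉ σ) : .a ∉ q := by
  induction h generalizing p with
  | nil => simp at hw
  | grow _ ih | finish _ ih =>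
    obtain ⟨p, rfl, rfl⟩ := (List.cons_eq_append_iff.mp hw).resolve_left (by simp)
    exact ih rfl (by simp [ha]) (by simp [hb])
  | emit_b h ih =>
    rcases List.cons_eq_append_iff.mp hw with ⟨rfl, hq⟩ | ⟨p, rfl, rfl⟩
    · obtain ⟨-, rfl⟩ := List.cons.inj hq
      exact fun haq => ha ((h.mem haq).resolve_right (by simp))
    · exact ih rfl ha hb
  | pop _ _ ih =>
    rcases List.cons_eq_append_iff.mp hw with ⟨rfl, hq⟩ | ⟨p, rfl, rfl⟩
    · exact absurd (List.cons.inj hq).1 (fun h => hb (h ▸ List.mem_cons_self))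
    · exact ih rfl (fun h => ha (List.mem_cons_of_mem _ h)) fun h => hb (List.mem_cons_of_mem _ h)

theorem replicate_b : ∀ k, Run false k [] (List.replicate k .b)
  | 0 => .nil
  | k + 1 => (replicate_b k).emit_b

theorem replicate_c (h : Run s k σ w) :
    ∀ m, Run s k (List.replicate m .c ++ σ) (List.replicate m .c ++ w)
  | 0 => h
  | m + 1 => .pop rfl (replicate_c h m)

theorem replicate_a {m : ℕ} (h : Run false (m + 1 + k) (List.replicate (m + 1) .c ++ σ) w) :
    Run true k σ (List.replicate (m + 1) .a ++ w) := by
  induction m generalizing k σ with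
  | zero =>
    rw [Nat.zero_add, Nat.add_comm] at h
    exact .finish h
  | succ m ih =>
    rw [List.replicate_succ', List.append_assoc, Nat.add_right_comm _ 1] at h
    exact .grow (ih h)

end Run

theorem mem_lang_counterGrammar_iff : w ∈ counterGrammar.lang ↔
    (∃ x y, x < y ∧ w = [x, y]) ∨ ∃ v, w = .a :: v ∧ Run true 1 [.c, .f] v := by
  have hinit : Encodes [.spine, .emit .b, .emit .c, .emit .f] true 1 [.c, .f] :=
    .spine (.emit_b (.counter rfl (.counter rfl .nil)))
  refine PCDerives.singleton_iff.trans ⟨?_, ?_⟩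
  · rintro ⟨l, γ, v, hp, h, rfl⟩
    cases (show Production .start l γ from hp) with
    | expand => exact .inr ⟨v, rfl, hinit.run h⟩
    | pair hxy =>
      obtain ⟨y, γ, v, hp, h, rfl⟩ := PCDerives.singleton_iff.mp h
      cases (show Production (.emit _) y γ from hp) with
      | emit => exact .inl ⟨_, _, hxy, by rw [PCDerives.nil_iff.mp h]⟩
  · rintro (⟨x, y, hxy, rfl⟩ | ⟨v, rfl, h⟩)
    · exact ⟨x, [.emit y], [y], .pair hxy, (Production.emit y).pcDerives .nil, rfl⟩
    · exact ⟨.a, _, v, .expand, h.pcDerives, rfl⟩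

theorem pair_mem_lang_counterGrammar_iff {x y : Letter} :
    [x, y] ∈ counterGrammar.lang ↔ x < y := by
  rw [mem_lang_counterGrammar_iff]
  refine ⟨?_, fun h => .inl ⟨x, y, h, rfl⟩⟩
  rintro (⟨_, _, h, heq⟩ | ⟨v, heq, h⟩)
  · cases heq; exact h
  · cases heq
    exact absurd h.length_le (by simp)

theorem exists_run_of_mem_lang (hw : w ∈ counterGrammar.lang) (hlen : 2 < w.length) :
    ∃ v, w = .a :: v ∧ Run true 1 [.c, .f] v := by
  refine (mem_lang_counterGrammar_iff.mp hw).resolve_left ?_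
  rintro ⟨x, y, -, rfl⟩
  exact lt_irrefl _ hlen

theorem isBalanced_of_mem_lang_counterGrammar (hw : w ∈ counterGrammar.lang)
    (hlen : 2 < w.length) : IsBalanced w := by
  obtain ⟨v, rfl, h⟩ := exists_run_of_mem_lang hw hlen
  refine ⟨?_, ?_, fun p q hp => ?_, fun p q hp => ?_⟩
  · rw [excess_cons, h.excess_a_b]
    rfl
  · rw [excess_cons, h.excess_a_c]
    rfl
  · obtain ⟨p, rfl, rfl⟩ := (List.cons_eq_append_iff.mp hp).resolve_left (by simp)
    rw [excess_cons, h.excess_before_f (ρ := [.c]) rfl rfl (by decide) List.not_mem_nil]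
    rfl
  · obtain ⟨p, rfl, rfl⟩ := (List.cons_eq_append_iff.mp hp).resolve_left (by simp)
    exact h.a_notMem_after_b rfl (by decide) (by decide)

theorem blockWord_mem_lang_counterGrammar {n : ℕ} (hn : 2 ≤ n) :
    blockWord n ∈ counterGrammar.lang := by
  obtain ⟨m, rfl⟩ := Nat.exists_eq_add_of_le' hn
  have hpop := Run.replicate_c (.pop (x := .f) rfl (Run.replicate_b (m + 2))) (m + 2)
  rw [List.replicate_succ' (n := m + 1), List.append_assoc] at hpop
  refine mem_lang_counterGrammar_iff.mpr (.inr ⟨_, ?_, Run.replicate_a hpop⟩)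
  rw [blockWord, ← List.replicate_succ', List.append_assoc]
  rfl

end Grammar

/-- some language is in trPCCFL but neither in shuffleCFL nor in traceCFL. -/
theorem exists_trpccfl_not_shufflecfl_not_tracecfl :
    ∃ (α : Type) (_ : Finite α) (L : Set (List α)),
      IsTrPCCFL L ∧ ¬ IsShuffleCFL L ∧ ¬ IsTraceCFL L := by
  have hdec : ¬ IsDecomposable counterGrammar.lang :=
    not_isDecomposable_of_isBalanced (fun _ => isBalanced_of_mem_lang_counterGrammar)
      fun _ => blockWord_mem_lang_counterGrammar
  refine ⟨Letter, inferInstance, counterGrammar.lang, ?_, ?_, ?_⟩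
  · exact ⟨counterGrammar, depTransitive_counterGrammar, rfl⟩
  · exact fun h => hdec h.isDecomposable
  · refine fun h => hdec (isDecomposable_of_isContextFree (h.isContextFree fun x y hxy => ?_))
    rw [pair_mem_lang_counterGrammar_iff, pair_mem_lang_counterGrammar_iff]
    exact hxy.lt_or_gt.elim (fun h hiff => h.asymm (hiff.mp h)) fun h hiff => h.asymm (hiff.mpr h)
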